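/- arXiv:2206.12081 — 3 statements merged into one kernel-verified Lean document; each statement's English description precedes it below -/
import Mathlib

section
/- Let d, N be positive integers, λ > 0, B ≥ 0 with B² ≤ λ, ε > 0, and let x_1, …, x_N ∈ ℝ^d satisfy ‖x_i‖ ≤ B for all i. Define Σ_0 = λ·I_d and Σ_i = λ·I_d + Σ_{k=1}^{i} x_k x_kᵀ. If x_iᵀ Σ_{i-1}⁻¹ x_i > ε² for every 1 ≤ i ≤ N, then N·ε² ≤ 2·d·ln(1 + N·B²/(d·λ)). -/
open Matrix Finset

/-!
The determinant of `Σ_N` is compared with its trace. By the matrix determinant lemma, adding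
`x_i x_iᵀ` multiplies the determinant by `1 + u_i` with `u_i = x_iᵀ Σ_i⁻¹ x_i`, while by AM-GM on
the eigenvalues `det Σ_N ≤ (tr Σ_N / d) ^ d`, and `tr Σ_N = d λ + ∑ ‖x_i‖²`. Hence
`∑ log (1 + u_i) ≤ d log (1 + ∑ ‖x_i‖² / (d λ))`. Since `Σ_i ≥ λ I`, each `u_i` is at most
`‖x_i‖² / λ`, and `u ≤ 2 log (1 + u)` on `[0, 2]`, so `∑ u_i` is bounded as well (the elliptical
potential lemma), while every bad event contributes at least `ε²` to this sum.
-/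

lemma prod_le_sum_div_card_pow {ι : Type*} {s : Finset ι} (hs : s.Nonempty) {z : ι → ℝ}
    (hz : ∀ i ∈ s, 0 ≤ z i) : ∏ i ∈ s, z i ≤ ((∑ i ∈ s, z i) / #s) ^ #s := by
  have hamgm := Real.geom_mean_le_arith_mean s (fun _ => 1) z (fun _ _ => zero_le_one)
    (by simpa using hs.card_pos) hz
  simp only [Real.rpow_one, sum_const, nsmul_eq_mul, mul_one, one_mul] at hamgm
  calc ∏ i ∈ s, z i = ((∏ i ∈ s, z i) ^ (#s : ℝ)⁻¹) ^ #s :=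
        (Real.rpow_inv_natCast_pow (prod_nonneg hz) hs.card_ne_zero).symm
    _ ≤ ((∑ i ∈ s, z i) / #s) ^ #s := by
        gcongr
        exact Real.rpow_nonneg (prod_nonneg hz) _

lemma le_two_mul_log_one_add {u : ℝ} (hu₀ : 0 ≤ u) (hu₂ : u ≤ 2) : u ≤ 2 * Real.log (1 + u) := by
  have hdiv : u ≤ 2 * (2 * u / (u + 2)) := by
    rw [← mul_div_assoc, le_div_iff₀ (by positivity)]
    nlinarith
  linarith [Real.le_log_one_add_of_nonneg hu₀]

lemma posSemidef_sum_vecMulVec_self {ι n R : Type*} [Finite n] [CommRing R] [PartialOrder R]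
    [StarRing R] [StarOrderedRing R] [TrivialStar R] (s : Finset ι) (x : ι → n → R) :
    (∑ k ∈ s, vecMulVec (x k) (x k)).PosSemidef :=
  posSemidef_sum _ fun k _ => by simpa using posSemidef_vecMulVec_self_star (x k)

section Determinant

variable {n R 𝕜 : Type*} [Fintype n] [DecidableEq n] [CommRing R] [RCLike 𝕜]

lemma det_add_vecMulVec {A : Matrix n n R} (hA : IsUnit A.det) (u v : n → R) :
    (A + vecMulVec u v).det = A.det * (1 + v ⬝ᵥ (A⁻¹ *ᵥ u)) := by
  rw [vecMulVec_eq Unit, det_add_replicateCol_mul_replicateRow hA, Matrix.mul_assoc,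
    ← replicateCol_mulVec, det_unique (n := Unit), Matrix.add_apply, one_apply_eq,
    replicateRow_mul_replicateCol_apply]

open scoped ComplexOrder in
lemma posSemidef_det_le_trace_div_card_pow [Nonempty n] {A : Matrix n n 𝕜} (hA : A.PosSemidef) :
    A.det ≤ (A.trace / Fintype.card n) ^ Fintype.card n := by
  have hamgm := prod_le_sum_div_card_pow univ_nonempty fun i _ => hA.eigenvalues_nonneg i
  rw [hA.isHermitian.det_eq_prod_eigenvalues, hA.isHermitian.trace_eq_sum_eigenvalues]
  exact_mod_cast hamgm

end Determinant

lemma dotProduct_inv_smul_one_add_mulVec_le {n : Type*} [Fintype n] [DecidableEq n] {lam : ℝ}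
    (hlam : 0 < lam) {A : Matrix n n ℝ} (hA : A.PosSemidef) (x : n → ℝ) :
    x ⬝ᵥ ((lam • (1 : Matrix n n ℝ) + A)⁻¹ *ᵥ x) ≤ x ⬝ᵥ x / lam := by
  set S := lam • (1 : Matrix n n ℝ) + A with hS
  set y := S⁻¹ *ᵥ x with hy
  have hS_pos : S.PosDef := (PosDef.one.smul hlam).add_posSemidef hA
  have hSy : lam • y + A *ᵥ y = x := by
    calc lam • y + A *ᵥ y = S *ᵥ y := by rw [hS, add_mulVec, smul_mulVec, one_mulVec]
      _ = x := by rw [hy, mulVec_mulVec, mul_nonsing_inv _ hS_pos.det_pos.ne'.isUnit, one_mulVec]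
  have hyx : lam * (y ⬝ᵥ y) ≤ x ⬝ᵥ y := by
    have hAy : 0 ≤ y ⬝ᵥ (A *ᵥ y) := by simpa using hA.dotProduct_mulVec_nonneg y
    rw [← hSy, add_dotProduct, smul_dotProduct, smul_eq_mul, dotProduct_comm (A *ᵥ y)]
    linarith
  have hsq : 0 ≤ x ⬝ᵥ x - 2 * lam * (x ⬝ᵥ y) + lam * (lam * (y ⬝ᵥ y)) := by
    calc 0 ≤ (x - lam • y) ⬝ᵥ (x - lam • y) := by
          simpa using dotProduct_star_self_nonneg (x - lam • y)
      _ = _ := by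
          simp only [sub_dotProduct, dotProduct_sub, smul_dotProduct, dotProduct_smul, smul_eq_mul,
            dotProduct_comm y x]
          ring
  rw [le_div_iff₀ hlam]
  linarith [mul_le_mul_of_nonneg_left hyx hlam.le]

section RegularizedCovariance

variable {n : Type*} [DecidableEq n] {lam : ℝ}

/-- The regularized covariance matrix `Σ_i = λ I + ∑_{k < i} x_k x_kᵀ` of the first `i` terms of a
sequence of feature vectors. Indices start at `0`, so `Σ_i` does not involve `x_i`. -/
def regularizedCov (lam : ℝ) (x : ℕ → n → ℝ) (i : ℕ) : Matrix n n ℝ :=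
  lam • (1 : Matrix n n ℝ) + ∑ k ∈ range i, vecMulVec (x k) (x k)

namespace regularizedCov

lemma succ (lam : ℝ) (x : ℕ → n → ℝ) (i : ℕ) :
    regularizedCov lam x (i + 1) = regularizedCov lam x i + vecMulVec (x i) (x i) := by
  simp only [regularizedCov, sum_range_succ, add_assoc]

lemma posDef [Finite n] (hlam : 0 < lam) (x : ℕ → n → ℝ) (i : ℕ) :
    (regularizedCov lam x i).PosDef :=
  (PosDef.one.smul hlam).add_posSemidef (posSemidef_sum_vecMulVec_self _ x)

variable [Fintype n]

lemma trace_eq (lam : ℝ) (x : ℕ → n → ℝ) (N : ℕ) :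
    (regularizedCov lam x N).trace = Fintype.card n * lam + ∑ i ∈ range N, x i ⬝ᵥ x i := by
  simp only [regularizedCov, trace_add, trace_smul, trace_one, trace_sum, trace_vecMulVec,
    smul_eq_mul, mul_comm]

lemma det_eq (hlam : 0 < lam) (x : ℕ → n → ℝ) (N : ℕ) :
    (regularizedCov lam x N).det =
      lam ^ Fintype.card n *
        ∏ i ∈ range N, (1 + x i ⬝ᵥ ((regularizedCov lam x i)⁻¹ *ᵥ x i)) := by
  induction N with
  | zero => simp [regularizedCov]
  | succ N ih =>
    rw [succ, det_add_vecMulVec (posDef hlam x N).det_pos.ne'.isUnit, prod_range_succ, ← mul_assoc,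
      ← ih]

lemma dotProduct_inv_mulVec_nonneg (hlam : 0 < lam) (x : ℕ → n → ℝ) (i : ℕ) (v : n → ℝ) :
    0 ≤ v ⬝ᵥ ((regularizedCov lam x i)⁻¹ *ᵥ v) := by
  simpa using (posDef hlam x i).inv.posSemidef.dotProduct_mulVec_nonneg v

lemma dotProduct_inv_mulVec_le (hlam : 0 < lam) (x : ℕ → n → ℝ) (i : ℕ) (v : n → ℝ) :
    v ⬝ᵥ ((regularizedCov lam x i)⁻¹ *ᵥ v) ≤ v ⬝ᵥ v / lam :=
  dotProduct_inv_smul_one_add_mulVec_le hlam (posSemidef_sum_vecMulVec_self _ x) v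

lemma prod_one_add_le [Nonempty n] (hlam : 0 < lam) (x : ℕ → n → ℝ) (N : ℕ) :
    ∏ i ∈ range N, (1 + x i ⬝ᵥ ((regularizedCov lam x i)⁻¹ *ᵥ x i)) ≤
      (1 + (∑ i ∈ range N, x i ⬝ᵥ x i) / (Fintype.card n * lam)) ^ Fintype.card n := by
  have hdet := posSemidef_det_le_trace_div_card_pow (posDef hlam x N).posSemidef
  have hmean : (regularizedCov lam x N).trace / Fintype.card n =
      lam * (1 + (∑ i ∈ range N, x i ⬝ᵥ x i) / (Fintype.card n * lam)) := by
    rw [trace_eq]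
    field_simp
  rw [det_eq hlam, hmean, mul_pow] at hdet
  exact le_of_mul_le_mul_left hdet (pow_pos hlam _)

lemma sum_dotProduct_inv_mulVec_le [Nonempty n] (hlam : 0 < lam) {x : ℕ → n → ℝ} {N : ℕ}
    (hx : ∀ i < N, x i ⬝ᵥ x i ≤ 2 * lam) :
    ∑ i ∈ range N, x i ⬝ᵥ ((regularizedCov lam x i)⁻¹ *ᵥ x i) ≤
      2 * Fintype.card n *
        Real.log (1 + (∑ i ∈ range N, x i ⬝ᵥ x i) / (Fintype.card n * lam)) := by
  set u : ℕ → ℝ := fun i => x i ⬝ᵥ ((regularizedCov lam x i)⁻¹ *ᵥ x i)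
  have hu_nonneg : ∀ i, 0 ≤ u i := fun i => dotProduct_inv_mulVec_nonneg hlam x i (x i)
  have hu_le : ∀ i < N, u i ≤ 2 := fun i hi =>
    (dotProduct_inv_mulVec_le hlam x i (x i)).trans ((div_le_iff₀ hlam).2 (hx i hi))
  have hu_pos : ∀ i, 0 < 1 + u i := fun i => add_pos_of_pos_of_nonneg one_pos (hu_nonneg i)
  calc ∑ i ∈ range N, u i
      ≤ ∑ i ∈ range N, 2 * Real.log (1 + u i) := sum_le_sum fun i hi =>
        le_two_mul_log_one_add (hu_nonneg i) (hu_le i (mem_range.1 hi))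
    _ = 2 * Real.log (∏ i ∈ range N, (1 + u i)) := by
        rw [← mul_sum, Real.log_prod fun i _ => (hu_pos i).ne']
    _ ≤ 2 * Real.log
          ((1 + (∑ i ∈ range N, x i ⬝ᵥ x i) / (Fintype.card n * lam)) ^ Fintype.card n) := by
        gcongr
        · exact prod_pos fun i _ => hu_pos i
        · exact prod_one_add_le hlam x N
    _ = _ := by rw [Real.log_pow, mul_assoc]

end regularizedCov

theorem bad_event_count_general [Fintype n] [Nonempty n] {N : ℕ} {B ε : ℝ} (hlam : 0 < lam)
    (hBlam : B ^ 2 ≤ 2 * lam) {x : ℕ → n → ℝ} (hx : ∀ i < N, x i ⬝ᵥ x i ≤ B ^ 2)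
    {s : Finset ℕ} (hs : s ⊆ range N)
    (hbad : ∀ i ∈ s, ε ^ 2 ≤ x i ⬝ᵥ ((regularizedCov lam x i)⁻¹ *ᵥ x i)) :
    #s * ε ^ 2 ≤
      2 * Fintype.card n * Real.log (1 + N * B ^ 2 / (Fintype.card n * lam)) := by
  have hx_nonneg : ∀ i, 0 ≤ x i ⬝ᵥ x i := fun i => by simpa using dotProduct_star_self_nonneg (x i)
  have hsum : ∑ i ∈ range N, x i ⬝ᵥ x i ≤ N * B ^ 2 := by
    simpa using sum_le_card_nsmul (range N) _ _ fun i hi => hx i (mem_range.1 hi)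
  calc #s * ε ^ 2
      ≤ ∑ i ∈ s, x i ⬝ᵥ ((regularizedCov lam x i)⁻¹ *ᵥ x i) := by
        simpa using card_nsmul_le_sum s _ _ hbad
    _ ≤ ∑ i ∈ range N, x i ⬝ᵥ ((regularizedCov lam x i)⁻¹ *ᵥ x i) :=
        sum_le_sum_of_subset_of_nonneg hs fun i _ _ =>
          regularizedCov.dotProduct_inv_mulVec_nonneg hlam x i (x i)
    _ ≤ 2 * Fintype.card n *
          Real.log (1 + (∑ i ∈ range N, x i ⬝ᵥ x i) / (Fintype.card n * lam)) :=
        regularizedCov.sum_dotProduct_inv_mulVec_le hlam fun i hi => (hx i hi).trans hBlam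
    _ ≤ 2 * Fintype.card n * Real.log (1 + N * B ^ 2 / (Fintype.card n * lam)) := by
        have := sum_nonneg fun i (_ : i ∈ range N) => hx_nonneg i
        gcongr

end RegularizedCovariance

/-- Counting of bad events: if every feature has uncovered elliptical norm
(`x_iᵀ Σ_i⁻¹ x_i > ε²` with `Σ_i = λ I + ∑_{k<i} x_k x_kᵀ`), `‖x_i‖ ≤ B` and `B² ≤ λ`,
then `N ε² ≤ 2 d ln(1 + N B²/(d λ))`. -/
theorem bad_event_count
    (d N : ℕ) (hd : 0 < d) (hN : 0 < N) (lam B ε : ℝ)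
    (hlam : 0 < lam) (hB : 0 ≤ B) (hBlam : B ^ 2 ≤ lam) (hε : 0 < ε)
    (x : ℕ → Fin d → ℝ) (hx : ∀ i < N, Real.sqrt (x i ⬝ᵥ x i) ≤ B)
    (Sig : ℕ → Matrix (Fin d) (Fin d) ℝ)
    (hSig : ∀ i, Sig i = lam • (1 : Matrix (Fin d) (Fin d) ℝ) +
      ∑ k ∈ Finset.range i, vecMulVec (x k) (x k))
    (hbad : ∀ i < N, x i ⬝ᵥ ((Sig i)⁻¹ *ᵥ x i) > ε ^ 2) :
    N * ε ^ 2 ≤ 2 * d * Real.log (1 + N * B ^ 2 / (d * lam)) := by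
  obtain rfl : Sig = regularizedCov lam x := funext hSig
  have : NeZero d := ⟨hd.ne'⟩
  simpa using bad_event_count_general hlam (by linarith)
    (fun i hi => (Real.sqrt_le_left hB).1 (hx i hi)) subset_rfl
    fun i hi => (hbad i (mem_range.1 hi)).le
end

section
/- Let N, M be positive integers, γ ≥ 0, and let K_1, …, K_M be real symmetric positive semidefinite N×N matrices such that ln det(I_N + K_j) ≤ γ for every j. Then ln det(I_N + (1/M)·Σ_{j=1}^{M} K_j) ≤ M·γ. -/
open Matrix

/-!
If `A = Yᴴ * Y` and `B = Xᴴ * X`, then stacking `Y` on top of `X` and applying Sylvester's identity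
`det (1 + Zᴴ * Z) = det (1 + Z * Zᴴ)` turns `det (1 + (A + B))` into the determinant of a positive
definite block matrix with diagonal blocks `1 + Y * Yᴴ` and `1 + X * Xᴴ`. Fischer's inequality
bounds it by the product of the two block determinants, so the information gain is subadditive on
positive semidefinite matrices. It is also monotone for the Loewner order, so scaling each summand
by a weight in `[0, 1]` only decreases its contribution.
-/

section InformationGain

open scoped ComplexOrder MatrixOrder

variable {𝕜 m n ι : Type*} [RCLike 𝕜] [Fintype m] [DecidableEq m] [Fintype n] [DecidableEq n]

lemma det_one_add_eq_prod_eigenvalues {A : Matrix n n 𝕜} (hA : A.IsHermitian) :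
    (1 + A).det = ∏ i, (1 + (hA.eigenvalues i : 𝕜)) := by
  conv_lhs => rw [hA.spectral_theorem, Unitary.conjStarAlgAut_apply, Matrix.mul_assoc,
    det_one_add_mul_comm, Matrix.mul_assoc, Unitary.coe_star_mul_self, Matrix.mul_one,
    ← diagonal_one, diagonal_add, det_diagonal]
  rfl

lemma one_le_det_one_add {A : Matrix n n 𝕜} (hA : A.PosSemidef) : 1 ≤ (1 + A).det := by
  rw [det_one_add_eq_prod_eigenvalues hA.isHermitian]
  norm_cast
  exact Finset.one_le_prod fun i _ ↦ le_add_of_nonneg_right (hA.eigenvalues_nonneg i)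

lemma det_le_det_of_le {A B : Matrix n n 𝕜} (hA : A.PosSemidef) (hAB : A ≤ B) :
    A.det ≤ B.det := by
  by_cases hdet : A.det = 0
  · exact hdet ▸ (hA.nonneg.trans hAB).posSemidef.det_nonneg
  obtain ⟨X, hX⟩ := CStarAlgebra.nonneg_iff_eq_star_mul_self.mp (sub_nonneg.mpr hAB)
  calc A.det ≤ A.det * (1 + X * A⁻¹ * Xᴴ).det :=
        le_mul_of_one_le_right hA.det_nonneg
          (one_le_det_one_add (hA.inv.mul_mul_conjTranspose_same X))
    _ = (A + Xᴴ * X).det := (det_add_mul _ _ (Ne.isUnit hdet)).symm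
    _ = B.det := by rw [← star_eq_conjTranspose, ← hX, add_sub_cancel]

/-- **Fischer's inequality**. -/
lemma det_fromBlocks_le_det_mul_det {A : Matrix m m 𝕜} {B : Matrix m n 𝕜} {D : Matrix n n 𝕜}
    (hA : A.PosDef) (h : (fromBlocks A B Bᴴ D).PosSemidef) :
    (fromBlocks A B Bᴴ D).det ≤ A.det * D.det := by
  have := hA.isUnit.invertible
  have hSchur : (D - Bᴴ * A⁻¹ * B).PosSemidef := (PosDef.fromBlocks₁₁ B D hA).mp h
  have hle : D - Bᴴ * A⁻¹ * B ≤ D :=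
    sub_le_self D (hA.inv.posSemidef.conjTranspose_mul_mul_same B).nonneg
  rw [det_fromBlocks₁₁, invOf_eq_nonsing_inv]
  exact mul_le_mul_of_nonneg_left (det_le_det_of_le hSchur hle) hA.det_pos.le

lemma det_one_add_add_le {A B : Matrix n n 𝕜} (hA : A.PosSemidef) (hB : B.PosSemidef) :
    (1 + (A + B)).det ≤ (1 + A).det * (1 + B).det := by
  obtain ⟨Y, rfl⟩ := CStarAlgebra.nonneg_iff_eq_star_mul_self.mp hA.nonneg
  obtain ⟨X, rfl⟩ := CStarAlgebra.nonneg_iff_eq_star_mul_self.mp hB.nonneg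
  simp only [star_eq_conjTranspose]
  have hblocks : 1 + fromRows Y X * (fromRows Y X)ᴴ =
      fromBlocks (1 + Y * Yᴴ) (Y * Xᴴ) (Y * Xᴴ)ᴴ (1 + X * Xᴴ) := by
    rw [conjTranspose_fromRows_eq_fromCols_conjTranspose, fromRows_mul_fromCols,
      ← fromBlocks_one, fromBlocks_add, zero_add, zero_add, conjTranspose_mul,
      conjTranspose_conjTranspose]
  have hpos : (1 + fromRows Y X * (fromRows Y X)ᴴ).PosSemidef :=
    PosSemidef.one.add (posSemidef_self_mul_conjTranspose _)
  calc (1 + (Yᴴ * Y + Xᴴ * X)).det = (1 + (fromRows Y X)ᴴ * fromRows Y X).det := by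
        rw [conjTranspose_fromRows_eq_fromCols_conjTranspose, fromCols_mul_fromRows]
    _ = (fromBlocks (1 + Y * Yᴴ) (Y * Xᴴ) (Y * Xᴴ)ᴴ (1 + X * Xᴴ)).det := by
        rw [det_one_add_mul_comm, hblocks]
    _ ≤ (1 + Y * Yᴴ).det * (1 + X * Xᴴ).det :=
        det_fromBlocks_le_det_mul_det
          (PosDef.one.add_posSemidef (posSemidef_self_mul_conjTranspose Y)) (hblocks ▸ hpos)
    _ = (1 + Yᴴ * Y).det * (1 + Xᴴ * X).det := by
        rw [det_one_add_mul_comm Y, det_one_add_mul_comm X]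

/-- The information gain `log det (1 + A)` of a kernel matrix `A`, without the customary factor
`1 / 2`. The real part is taken only to land in `ℝ`: the determinant is real for Hermitian `A`. -/
noncomputable def informationGain (A : Matrix n n 𝕜) : ℝ :=
  Real.log (RCLike.re (1 + A).det)

lemma one_le_re_det_one_add {A : Matrix n n 𝕜} (hA : A.PosSemidef) : 1 ≤ RCLike.re (1 + A).det := by
  simpa only [RCLike.one_re] using (RCLike.le_iff_re_im.mp (one_le_det_one_add hA)).1

lemma informationGain_zero : informationGain (0 : Matrix n n 𝕜) = 0 := by
  simp [informationGain]

lemma informationGain_mono {A B : Matrix n n 𝕜} (hA : A.PosSemidef) (hAB : A ≤ B) :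
    informationGain A ≤ informationGain B := by
  have hle : (1 + A).det ≤ (1 + B).det :=
    det_le_det_of_le (PosSemidef.one.add hA) (by gcongr)
  exact Real.log_le_log (zero_lt_one.trans_le (one_le_re_det_one_add hA))
    (RCLike.le_iff_re_im.mp hle).1

lemma informationGain_add_le {A B : Matrix n n 𝕜} (hA : A.PosSemidef) (hB : B.PosSemidef) :
    informationGain (A + B) ≤ informationGain A + informationGain B := by
  have hA1 := one_le_re_det_one_add hA
  have hB1 := one_le_re_det_one_add hB
  have hAB1 := one_le_re_det_one_add (hA.add hB)
  have him : RCLike.im (1 + A).det = 0 :=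
    (RCLike.le_iff_re_im.mp (one_le_det_one_add hA)).2.symm.trans RCLike.one_im
  have hle : RCLike.re (1 + (A + B)).det ≤ RCLike.re (1 + A).det * RCLike.re (1 + B).det := by
    simpa only [RCLike.mul_re, him, zero_mul, sub_zero] using
      (RCLike.le_iff_re_im.mp (det_one_add_add_le hA hB)).1
  unfold informationGain
  rw [← Real.log_mul (by positivity) (by positivity)]
  exact Real.log_le_log (by positivity) hle

lemma informationGain_sum_le (s : Finset ι) {K : ι → Matrix n n 𝕜}
    (hK : ∀ j ∈ s, (K j).PosSemidef) :
    informationGain (∑ j ∈ s, K j) ≤ ∑ j ∈ s, informationGain (K j) :=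
  Finset.le_sum_of_subadditive_on_pred informationGain (fun A : Matrix n n 𝕜 ↦ A.PosSemidef)
    informationGain_zero.le (fun _ _ ↦ informationGain_add_le) (fun _ _ ↦ PosSemidef.add) K hK

theorem information_gain_average_general (s : Finset ι) {w : ι → ℝ} {K : ι → Matrix n n 𝕜}
    (hw : ∀ j ∈ s, w j ∈ Set.Icc 0 1) (hK : ∀ j ∈ s, (K j).PosSemidef) :
    informationGain (∑ j ∈ s, w j • K j) ≤ ∑ j ∈ s, informationGain (K j) := by
  have hwK : ∀ j ∈ s, (w j • K j).PosSemidef := fun j hj ↦ (hK j hj).smul (hw j hj).1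
  calc informationGain (∑ j ∈ s, w j • K j)
      ≤ ∑ j ∈ s, informationGain (w j • K j) := informationGain_sum_le s hwK
    _ ≤ ∑ j ∈ s, informationGain (K j) := Finset.sum_le_sum fun j hj ↦
        informationGain_mono (hwK j hj) (smul_le_of_le_one_left (hK j hj).nonneg (hw j hj).2)

end InformationGain

/-- Information gain of an averaged kernel matrix: if `ln det(I + K_j) ≤ γ` for each of
`M` PSD matrices `K_j`, then `ln det(I + (1/M) ∑_j K_j) ≤ M γ`. -/
theorem information_gain_average
    (N M : ℕ) (hN : 0 < N) (hM : 0 < M) (γ : ℝ) (hγ : 0 ≤ γ)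
    (K : Fin M → Matrix (Fin N) (Fin N) ℝ)
    (hK : ∀ j, (K j).PosSemidef)
    (hld : ∀ j, Real.log (1 + K j).det ≤ γ) :
    Real.log (1 + (M : ℝ)⁻¹ • ∑ j, K j).det ≤ M * γ := by
  have h := information_gain_average_general Finset.univ
    (fun _ _ ↦ ⟨by positivity, Nat.cast_inv_le_one M⟩) (fun j _ ↦ hK j)
  simpa [informationGain, Finset.smul_sum] using
    h.trans (Finset.sum_le_card_nsmul _ _ γ fun j _ ↦ hld j)
end

section
/- Let λ > 0, Θ ≥ 0, E ≥ 0, E' ≥ 0, ε ≥ 0. Let x̂_1, …, x̂_N ∈ ℝ^d and x_1, …, x_N ∈ ℝ^d, let θ* ∈ ℝ^d with ‖θ*‖ ≤ Θ, let z_1, …, z_N ∈ ℝ, and set y_i = ⟨θ*, x_i⟩ + z_i, Σ = λ·I_d + Σ_{i=1}^{N} x̂_i x̂_iᵀ, and θ̂ = Σ⁻¹ Σ_{i=1}^{N} y_i·x̂_i. Suppose |⟨x_i − x̂_i, θ*⟩ + z_i| ≤ E for every i. Then for any test vectors x̂, x ∈ ℝ^d with √(x̂ᵀ Σ⁻¹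 x̂) ≤ ε and |⟨θ*, x̂ − x⟩| ≤ E': |⟨θ̂, x̂⟩ − ⟨θ*, x⟩| ≤ √λ·Θ·ε + E·√N·ε + E'. -/
open Matrix Finset

/-! Write `u = Σ⁻¹ x̂` and let `r = y - X̂ θ*` be the residual of the true parameter. Since
`Σ = λ I + X̂ᵀ X̂` is symmetric, the training error on `x̂` splits exactly as
`⟨θ̂ - θ*, x̂⟩ = ⟨r, X̂ u⟩ - λ ⟨θ*, u⟩`, and `x̂ᵀ Σ⁻¹ x̂ = uᵀ Σ u = λ ‖u‖² + ‖X̂ u‖²`. The coverage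
bound therefore controls both `‖X̂ u‖` and `√λ ‖u‖`, and Cauchy–Schwarz bounds each term. -/

section DotProduct

variable {ι : Type*} [Fintype ι]

lemma abs_dotProduct_le_sqrt_mul_sqrt (v w : ι → ℝ) :
    |v ⬝ᵥ w| ≤ √(v ⬝ᵥ v) * √(w ⬝ᵥ w) := by
  have hv : 0 ≤ v ⬝ᵥ v := dotProduct_self_star_nonneg v
  rw [← Real.sqrt_mul hv]
  refine Real.abs_le_sqrt ?_
  simpa only [dotProduct, sq] using sum_mul_sq_le_sq_mul_sq univ v w

lemma sqrt_dotProduct_self_le_of_forall_abs_le {v : ι → ℝ} {C : ℝ} (hv : ∀ i, |v i| ≤ C) :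
    √(v ⬝ᵥ v) ≤ C * √(Fintype.card ι) := by
  rcases isEmpty_or_nonempty ι with _ | ⟨⟨i₀⟩⟩
  · simp
  have hC : 0 ≤ C := (abs_nonneg _).trans (hv i₀)
  calc √(v ⬝ᵥ v) ≤ √(∑ _i : ι, C ^ 2) := by
        refine Real.sqrt_le_sqrt (sum_le_sum fun i _ => ?_)
        rw [← sq]
        exact sq_le_sq.mpr ((hv i).trans (le_abs_self C))
    _ = C * √(Fintype.card ι) := by
        rw [sum_const, card_univ, nsmul_eq_mul, mul_comm, Real.sqrt_mul (sq_nonneg C),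
          Real.sqrt_sq hC]

end DotProduct

section RidgeAlgebra

variable {R n ι : Type*} [CommRing R] [DecidableEq n] [Fintype ι]

/-- The regularized Gram matrix `λ I + Xᵀ X` (the paper's `Σ`) of a design matrix `X`, whose rows
are the feature vectors. -/
def regularizedGram (lam : R) (X : Matrix ι n R) : Matrix n n R :=
  lam • 1 + Xᵀ * X

lemma regularizedGram_of (lam : R) (x : ι → n → R) :
    regularizedGram lam (of x) = lam • 1 + ∑ i, vecMulVec (x i) (x i) := by
  ext j k
  simp [regularizedGram, mul_apply, Matrix.sum_apply, vecMulVec_apply]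

lemma isSymm_regularizedGram (lam : R) (X : Matrix ι n R) : (regularizedGram lam X).IsSymm :=
  (isSymm_one.smul lam).add (by rw [IsSymm, transpose_mul, transpose_transpose])

variable [Fintype n]

/-- The ridge regression estimator `(λ I + Xᵀ X)⁻¹ Xᵀ y` (the paper's `θ̂`) for the design matrix
`X` and the responses `y`. The inverse is Mathlib's, which is zero when the regularized Gram matrix
is singular. -/
noncomputable def ridgeEstimator (lam : R) (X : Matrix ι n R) (y : ι → R) : n → R :=
  (regularizedGram lam X)⁻¹ *ᵥ (Xᵀ *ᵥ y)

lemma ridgeEstimator_of (lam : R) (x : ι → n → R) (y : ι → R) :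
    ridgeEstimator lam (of x) y = (regularizedGram lam (of x))⁻¹ *ᵥ ∑ i, y i • x i := by
  rw [ridgeEstimator, mulVec_transpose, vecMul_eq_sum]
  rfl

lemma dotProduct_regularizedGram_mulVec (lam : R) (X : Matrix ι n R) (v u : n → R) :
    v ⬝ᵥ (regularizedGram lam X *ᵥ u) = lam * (v ⬝ᵥ u) + (X *ᵥ v) ⬝ᵥ (X *ᵥ u) := by
  rw [regularizedGram, add_mulVec, dotProduct_add, smul_mulVec, one_mulVec, dotProduct_smul,
    smul_eq_mul, ← mulVec_mulVec, dotProduct_transpose_mulVec, dotProduct_comm (X *ᵥ u)]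

lemma regularizedGram_mulVec_inv_mulVec {lam : R} {X : Matrix ι n R}
    (hX : IsUnit (regularizedGram lam X)) (w : n → R) :
    regularizedGram lam X *ᵥ ((regularizedGram lam X)⁻¹ *ᵥ w) = w := by
  rw [mulVec_mulVec, mul_nonsing_inv _ ((isUnit_iff_isUnit_det _).mp hX), one_mulVec]

lemma ridgeEstimator_dotProduct (lam : R) (X : Matrix ι n R) (y : ι → R) (w : n → R) :
    ridgeEstimator lam X y ⬝ᵥ w = y ⬝ᵥ (X *ᵥ ((regularizedGram lam X)⁻¹ *ᵥ w)) := by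
  have hinv : ((regularizedGram lam X)⁻¹)ᵀ = (regularizedGram lam X)⁻¹ := by
    rw [transpose_nonsing_inv, isSymm_regularizedGram]
  rw [ridgeEstimator, dotProduct_comm, ← hinv, dotProduct_transpose_mulVec, hinv,
    dotProduct_comm, dotProduct_transpose_mulVec]

lemma ridgeEstimator_dotProduct_sub {lam : R} {X : Matrix ι n R}
    (hX : IsUnit (regularizedGram lam X)) (y : ι → R) (θ w : n → R) :
    ridgeEstimator lam X y ⬝ᵥ w - θ ⬝ᵥ w =
      (y - X *ᵥ θ) ⬝ᵥ (X *ᵥ ((regularizedGram lam X)⁻¹ *ᵥ w)) -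
        lam * (θ ⬝ᵥ ((regularizedGram lam X)⁻¹ *ᵥ w)) := by
  have hθ := dotProduct_regularizedGram_mulVec lam X θ ((regularizedGram lam X)⁻¹ *ᵥ w)
  rw [regularizedGram_mulVec_inv_mulVec hX] at hθ
  rw [ridgeEstimator_dotProduct, hθ, sub_dotProduct]
  ring

end RidgeAlgebra

section RidgeBounds

variable {n ι : Type*} [Fintype n] [DecidableEq n] [Fintype ι] {lam : ℝ}

lemma isUnit_regularizedGram (hlam : 0 < lam) (X : Matrix ι n ℝ) :
    IsUnit (regularizedGram lam X) :=
  ((PosDef.one.smul hlam).add_posSemidef (posSemidef_conjTranspose_mul_self X)).isUnit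

lemma sqrt_mul_sqrt_dotProduct_self_le_regularizedGram (hlam : 0 ≤ lam)
    (X : Matrix ι n ℝ) (u : n → ℝ) :
    √lam * √(u ⬝ᵥ u) ≤ √(u ⬝ᵥ (regularizedGram lam X *ᵥ u)) := by
  rw [← Real.sqrt_mul hlam, dotProduct_regularizedGram_mulVec]
  exact Real.sqrt_le_sqrt (le_add_of_nonneg_right (dotProduct_self_star_nonneg _))

lemma sqrt_mulVec_dotProduct_mulVec_le_regularizedGram (hlam : 0 ≤ lam)
    (X : Matrix ι n ℝ) (u : n → ℝ) :
    √((X *ᵥ u) ⬝ᵥ (X *ᵥ u)) ≤ √(u ⬝ᵥ (regularizedGram lam X *ᵥ u)) := by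
  rw [dotProduct_regularizedGram_mulVec]
  exact Real.sqrt_le_sqrt
    (le_add_of_nonneg_left (mul_nonneg hlam (dotProduct_self_star_nonneg _)))

lemma abs_ridgeEstimator_dotProduct_sub_le (hlam : 0 ≤ lam) {X : Matrix ι n ℝ}
    (hX : IsUnit (regularizedGram lam X)) (y : ι → ℝ) (θ w : n → ℝ) :
    |ridgeEstimator lam X y ⬝ᵥ w - θ ⬝ᵥ w| ≤
      (√lam * √(θ ⬝ᵥ θ) + √((y - X *ᵥ θ) ⬝ᵥ (y - X *ᵥ θ))) *
        √(w ⬝ᵥ ((regularizedGram lam X)⁻¹ *ᵥ w)) := by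
  set r := y - X *ᵥ θ
  set u := (regularizedGram lam X)⁻¹ *ᵥ w
  have hwu : w ⬝ᵥ u = u ⬝ᵥ (regularizedGram lam X *ᵥ u) := by
    rw [regularizedGram_mulVec_inv_mulVec hX, dotProduct_comm]
  have hnoise : |r ⬝ᵥ (X *ᵥ u)| ≤ √(r ⬝ᵥ r) * √(w ⬝ᵥ u) :=
    (abs_dotProduct_le_sqrt_mul_sqrt r _).trans <| by
      gcongr ?_ * ?_
      exact hwu ▸ sqrt_mulVec_dotProduct_mulVec_le_regularizedGram hlam X u
  have hbias : |lam * (θ ⬝ᵥ u)| ≤ √lam * √(θ ⬝ᵥ θ) * √(w ⬝ᵥ u) :=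
    calc |lam * (θ ⬝ᵥ u)| = lam * |θ ⬝ᵥ u| := by rw [abs_mul, abs_of_nonneg hlam]
      _ ≤ lam * (√(θ ⬝ᵥ θ) * √(u ⬝ᵥ u)) := by
          gcongr
          exact abs_dotProduct_le_sqrt_mul_sqrt θ u
      _ = √lam * √(θ ⬝ᵥ θ) * (√lam * √(u ⬝ᵥ u)) := by
          linear_combination -(√(θ ⬝ᵥ θ) * √(u ⬝ᵥ u)) * Real.mul_self_sqrt hlam
      _ ≤ √lam * √(θ ⬝ᵥ θ) * √(w ⬝ᵥ u) := by
          gcongr ?_ * ?_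
          exact hwu ▸ sqrt_mul_sqrt_dotProduct_self_le_regularizedGram hlam X u
  calc |ridgeEstimator lam X y ⬝ᵥ w - θ ⬝ᵥ w| = |r ⬝ᵥ (X *ᵥ u) - lam * (θ ⬝ᵥ u)| := by
        rw [ridgeEstimator_dotProduct_sub hX]
    _ ≤ |r ⬝ᵥ (X *ᵥ u)| + |lam * (θ ⬝ᵥ u)| := abs_sub _ _
    _ ≤ (√lam * √(θ ⬝ᵥ θ) + √(r ⬝ᵥ r)) * √(w ⬝ᵥ u) := by linarith

theorem prediction_error_bound_general {Θ E E' ε : ℝ} (hlam : 0 ≤ lam)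
    {xh x : ι → n → ℝ} {θs : n → ℝ} (hθs : √(θs ⬝ᵥ θs) ≤ Θ) {z y : ι → ℝ}
    (hy : ∀ i, y i = θs ⬝ᵥ x i + z i) {Sig : Matrix n n ℝ}
    (hSig : Sig = lam • (1 : Matrix n n ℝ) + ∑ i, vecMulVec (xh i) (xh i)) (hunit : IsUnit Sig)
    {θh : n → ℝ} (hθh : θh = Sig⁻¹ *ᵥ (∑ i, y i • xh i))
    (hpert : ∀ i, |(x i - xh i) ⬝ᵥ θs + z i| ≤ E) {xhTest xTest : n → ℝ}
    (hcov : √(xhTest ⬝ᵥ (Sig⁻¹ *ᵥ xhTest)) ≤ ε) (htest : |θs ⬝ᵥ (xhTest - xTest)| ≤ E') :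
    |θh ⬝ᵥ xhTest - θs ⬝ᵥ xTest| ≤ √lam * Θ * ε + E * √(Fintype.card ι) * ε + E' := by
  rw [← regularizedGram_of] at hSig
  subst hSig
  rw [← ridgeEstimator_of] at hθh
  have hresidual : ∀ i, |(y - of xh *ᵥ θs) i| ≤ E := fun i => by
    have hi : (y - of xh *ᵥ θs) i = (x i - xh i) ⬝ᵥ θs + z i := by
      rw [Pi.sub_apply, hy, sub_dotProduct, dotProduct_comm θs]
      exact add_sub_right_comm _ _ _
    exact hi ▸ hpert i
  have hscale : √lam * √(θs ⬝ᵥ θs) + √((y - of xh *ᵥ θs) ⬝ᵥ (y - of xh *ᵥ θs)) ≤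
      √lam * Θ + E * √(Fintype.card ι) := by
    gcongr
    exact sqrt_dotProduct_self_le_of_forall_abs_le hresidual
  have htrain : |θh ⬝ᵥ xhTest - θs ⬝ᵥ xhTest| ≤ (√lam * Θ + E * √(Fintype.card ι)) * ε := by
    rw [hθh]
    exact (abs_ridgeEstimator_dotProduct_sub_le hlam hunit y θs xhTest).trans <|
      mul_le_mul hscale hcov (Real.sqrt_nonneg _) ((by positivity : (0 : ℝ) ≤ _).trans hscale)
  rw [dotProduct_sub] at htest
  calc |θh ⬝ᵥ xhTest - θs ⬝ᵥ xTest|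
      ≤ |θh ⬝ᵥ xhTest - θs ⬝ᵥ xhTest| + |θs ⬝ᵥ xhTest - θs ⬝ᵥ xTest| := abs_sub_le _ _ _
    _ ≤ √lam * Θ * ε + E * √(Fintype.card ι) * ε + E' := by linarith

end RidgeBounds

/-- Full prediction-error guarantee: under the least-squares setup with training
perturbations bounded by `E`, a covered estimated test feature `x̂`
(`√(x̂ᵀ Σ⁻¹ x̂) ≤ ε`) and test-time feature-estimation error `|⟨θ*, x̂ − x⟩| ≤ E'`,
we have `|⟨θ̂, x̂⟩ − ⟨θ*, x⟩| ≤ √λ Θ ε + E √N ε + E'`. -/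
theorem prediction_error_bound
    {d N : ℕ} (lam Θ E E' ε : ℝ)
    (hlam : 0 < lam) (hΘ : 0 ≤ Θ) (hE : 0 ≤ E) (hE' : 0 ≤ E') (hε : 0 ≤ ε)
    (xh x : Fin N → Fin d → ℝ) (θs : Fin d → ℝ)
    (hθs : Real.sqrt (θs ⬝ᵥ θs) ≤ Θ) (z : Fin N → ℝ)
    (y : Fin N → ℝ) (hy : ∀ i, y i = θs ⬝ᵥ x i + z i)
    (Sig : Matrix (Fin d) (Fin d) ℝ)
    (hSig : Sig = lam • (1 : Matrix (Fin d) (Fin d) ℝ) + ∑ i, vecMulVec (xh i) (xh i))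
    (θh : Fin d → ℝ) (hθh : θh = Sig⁻¹ *ᵥ (∑ i, y i • xh i))
    (hpert : ∀ i, |(x i - xh i) ⬝ᵥ θs + z i| ≤ E)
    (xhTest xTest : Fin d → ℝ)
    (hcov : Real.sqrt (xhTest ⬝ᵥ (Sig⁻¹ *ᵥ xhTest)) ≤ ε)
    (htest : |θs ⬝ᵥ (xhTest - xTest)| ≤ E') :
    |θh ⬝ᵥ xhTest - θs ⬝ᵥ xTest| ≤
      Real.sqrt lam * Θ * ε + E * Real.sqrt N * ε + E' := by
  have hunit : IsUnit Sig := hSig ▸ regularizedGram_of lam xh ▸ isUnit_regularizedGram hlam (of xh)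
  simpa using prediction_error_bound_general hlam.le hθs hy hSig hunit hθh hpert hcov htest
end
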